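/- Weak duality between the cell-partitioning problem and the dual objective: let (A_i)_{i ∈ Fin M} be a measurable partition of D (pairwise disjoint measurable sets with union D) satisfying the capacity constraints (μ(A_i)).toReal = ω i for every i. Then for every ψ : Fin M → ℝ, Σ_{i ∈ Fin M} ∫_{A_i} J v i dμ(v) ≥ F(ψ). -/

import Mathlib

open MeasureTheory

/-!
On the cell `A i` the `c`-transform is at most `J · i - ψ i`. Integrating this bound over each cell
and summing, the constants `ψ i` contribute `-∑ i, ψ i * μ (A i) = -∑ i, ψ i * ω i`, which is
exactly the negative of the linear part of the dual objective.
-/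

section IntegralInfimum

variable {ι D : Type*} [MeasurableSpace D] {μ : Measure D}

theorem integrable_iInf_of_finite [Finite ι] {f : ι → D → ℝ} (hf : ∀ i, Integrable (f i) μ) :
    Integrable (fun v => ⨅ i, f i v) μ := by
  cases nonempty_fintype ι
  cases isEmpty_or_nonempty ι with
  | inl _ => simp
  | inr _ =>
    have hinf : Integrable (Finset.univ.inf' Finset.univ_nonempty f) μ :=
      Finset.inf'_induction _ f (p := (Integrable · μ)) (fun _ h₁ _ h₂ => h₁.inf h₂) fun i _ => hf i
    simpa only [Finset.inf'_univ_eq_ciInf, ← iInf_apply] using hinf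

variable [Fintype ι] {A : ι → Set D}

theorem integral_eq_sum_setIntegral_of_ae_partition {E : Type*} [NormedAddCommGroup E]
    [NormedSpace ℝ E] {g : D → E} (hg : Integrable g μ) (hmeas : ∀ i, NullMeasurableSet (A i) μ)
    (hdisj : Pairwise (Function.onFun (AEDisjoint μ) A)) (hcover : (⋃ i, A i) =ᵐ[μ] Set.univ) :
    ∫ v, g v ∂μ = ∑ i, ∫ v in A i, g v ∂μ := by
  rw [← setIntegral_univ, ← setIntegral_congr_set hcover,
    integral_iUnion_ae hmeas hdisj hg.integrableOn, tsum_fintype]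

theorem integral_iInf_le_sum_setIntegral {f : ι → D → ℝ} (hf : ∀ i, Integrable (f i) μ)
    (hmeas : ∀ i, NullMeasurableSet (A i) μ)
    (hdisj : Pairwise (Function.onFun (AEDisjoint μ) A)) (hcover : (⋃ i, A i) =ᵐ[μ] Set.univ) :
    ∫ v, ⨅ i, f i v ∂μ ≤ ∑ i, ∫ v in A i, f i v ∂μ := by
  have hinf := integrable_iInf_of_finite hf
  rw [integral_eq_sum_setIntegral_of_ae_partition hinf hmeas hdisj hcover]
  exact Finset.sum_le_sum fun i _ => setIntegral_mono hinf.integrableOn (hf i).integrableOn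
    fun v => ciInf_le (Set.finite_range (f · v)).bddBelow i

end IntegralInfimum

theorem setIntegral_sub_const {D : Type*} [MeasurableSpace D] {μ : Measure D} {s : Set D}
    {g : D → ℝ} (hg : IntegrableOn g s μ) (hs : μ s ≠ ⊤) (c : ℝ) :
    ∫ v in s, (g v - c) ∂μ = ∫ v in s, g v ∂μ - c * μ.real s := by
  rw [integral_sub hg (integrableOn_const hs), setIntegral_const, smul_eq_mul, mul_comm]

/-- The `c`-transform of the potential `ψ` for the cost `J`. The minimum over `ι` is encoded as a
real infimum, which is attained for finite nonempty `ι` and takes the value `0` for empty `ι`. -/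
noncomputable def cTransform {ι D : Type*} (J : D → ι → ℝ) (ψ : ι → ℝ) (v : D) : ℝ :=
  ⨅ i, (J v i - ψ i)

/-- The dual objective of the cell-partitioning problem with cost `J` and capacities `ω`. -/
noncomputable def dualObjective {ι D : Type*} [Fintype ι] [MeasurableSpace D] (μ : Measure D)
    (J : D → ι → ℝ) (ω ψ : ι → ℝ) : ℝ :=
  ∑ i, ψ i * ω i + ∫ v, cTransform J ψ v ∂μ

theorem cell_partition_weak_duality_general {ι D : Type*} [Fintype ι] [MeasurableSpace D]
    {μ : Measure D} [IsFiniteMeasure μ] {J : D → ι → ℝ} (hJ : ∀ i, Integrable (J · i) μ)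
    {ω : ι → ℝ} {A : ι → Set D} (hmeas : ∀ i, NullMeasurableSet (A i) μ)
    (hdisj : Pairwise (Function.onFun (AEDisjoint μ) A)) (hcover : (⋃ i, A i) =ᵐ[μ] Set.univ)
    (hcap : ∀ i, μ.real (A i) = ω i) (ψ : ι → ℝ) :
    dualObjective μ J ω ψ ≤ ∑ i, ∫ v in A i, J v i ∂μ :=
  calc dualObjective μ J ω ψ
    _ ≤ ∑ i, ψ i * ω i + ∑ i, ∫ v in A i, (J v i - ψ i) ∂μ := by
      have hJψ i : Integrable (fun v => J v i - ψ i) μ := (hJ i).sub (integrable_const _)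
      exact add_le_add_right (integral_iInf_le_sum_setIntegral hJψ hmeas hdisj hcover) _
    _ = ∑ i, ψ i * ω i + ∑ i, (∫ v in A i, J v i ∂μ - ψ i * ω i) := by
      simp only [setIntegral_sub_const (hJ _).integrableOn (measure_ne_top μ _), hcap]
    _ = ∑ i, ∫ v in A i, J v i ∂μ := by
      rw [← Finset.sum_add_distrib]
      simp only [add_sub_cancel]

/-- Weak duality: the primal cost of any measurable partition `(A_i)` of `D`
satisfying the capacity constraints `μ(A_i) = ω i` is at least the dual
objective `F ψ`, for every `ψ`. -/
theorem cell_partition_weak_duality {D : Type*} [MeasurableSpace D]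
    (μ : Measure D) [IsFiniteMeasure μ] (M : ℕ) (hM : 0 < M)
    (J : D → Fin M → ℝ) (hJint : ∀ i, Integrable (fun v => J v i) μ)
    (hJmeas : ∀ i, Measurable (fun v => J v i))
    (ω : Fin M → ℝ) (F : (Fin M → ℝ) → ℝ)
    (hF : ∀ ψ : Fin M → ℝ,
      F ψ = ∑ i, ψ i * ω i + ∫ v, (⨅ i, (J v i - ψ i)) ∂μ)
    (A : Fin M → Set D)
    (hmeas : ∀ i, MeasurableSet (A i))
    (hdisj : Pairwise (Function.onFun Disjoint A))
    (hcover : (⋃ i, A i) = Set.univ)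
    (hcap : ∀ i, (μ (A i)).toReal = ω i)
    (ψ : Fin M → ℝ) :
    F ψ ≤ ∑ i, ∫ v in A i, J v i ∂μ :=
  (hF ψ).trans_le <| cell_partition_weak_duality_general hJint
    (fun i => (hmeas i).nullMeasurableSet) (hdisj.mono fun _ _ h => h.aedisjoint)
    hcover.eventuallyEq hcap ψ
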